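/- Let H=(V_H,E_H) be a fixed graph with at least two edges, let P be a strict partial order on E_H with height(P) the maximum size of a chain in P, let ψ be a label multiplicity distribution, and set ρ_H = min over subgraphs I=(V_I,E_I) of H with at least two edges of |V_I|/(|E_I|−1). Let β,T:ℕ→ℕ with T(n)≥β(n) for all n, and suppose there exists n₀ such that β(n)≥height(P) for all n≥n₀. If β(n)/T(n)·n^{ρ_H} → 0 as n→∞, then the probability that a random temporal graph drawn from Γ_{[n]}(ψ,T(n)) contains (H,P) as a β(n)-temporal motif tends to 0 as n→∞. -/

import Mathlib

open MeasureTheory ProbabilityTheory Filter Set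
open scoped ENNReal NNReal Topology

noncomputable section

namespace RTG

/-- A temporal graph on vertex type `V`, given by the finite set of real time labels
attached to each potential edge (unordered pair of vertices). -/
abbrev TGraph (V : Type*) := Sym2 V → Finset ℝ

/-- `P` is a strict partial order supported on the set `s`. -/
def StrictPartialOrderOn {α : Type*} (s : Set α) (P : α → α → Prop) : Prop :=
  (∀ a, ¬ P a a) ∧ (∀ a b c, P a b → P b c → P a c) ∧ ∀ a b, P a b → a ∈ s ∧ b ∈ s

/-- The temporal graph `Λ` contains `(H, P)` as a `δ`-temporal motif. -/
def Contains {VH V : Type*} (H : SimpleGraph VH) (P : Sym2 VH → Sym2 VH → Prop)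
    (Λ : TGraph V) (δ : ℝ) : Prop :=
  ∃ Φ : VH → V, Function.Injective Φ ∧
    ∃ lab : Sym2 VH → ℝ,
      (∀ e ∈ H.edgeSet, lab e ∈ Λ (Sym2.map Φ e)) ∧
      (∀ e f, P e f → lab e < lab f) ∧
      (∀ e ∈ H.edgeSet, ∀ f ∈ H.edgeSet, lab e - lab f < δ)

/-- The sparsity `ρ_H` of a graph `H`: the minimum over subgraphs with at least two
edges of `|V_I| / (|E_I| - 1)`. -/
def sparsity {VH : Type*} (H : SimpleGraph VH) : ℝ :=
  sInf {x : ℝ | ∃ I : H.Subgraph, 2 ≤ I.edgeSet.ncard ∧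
    x = (I.verts.ncard : ℝ) / ((I.edgeSet.ncard : ℝ) - 1)}

/-- The space of label data on a single edge: a number `k` of labels together with the
tuple of `k` label values (indexed in order of sampling). -/
abbrev LabelSpace := Σ k : ℕ, Fin k → ℝ

/-- The uniform distribution on `(0, 1]`. -/
def unif01 : Measure ℝ := volume.restrict (Set.Ioc 0 1)

/-- The uniform distribution on `{1, …, T}` (as a measure on `ℝ`). -/
def unifDisc (T : ℕ) : Measure ℝ :=
  (T : ℝ≥0∞)⁻¹ • ∑ k ∈ Finset.Icc 1 T, Measure.dirac (k : ℝ)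

/-- The distribution of the label data of a single edge: the number of labels is drawn
according to `ψ` and, independently, each label value is drawn according to `ν`. -/
def edgeMeasure (ν : Measure ℝ) (ψ : Measure ℕ) : Measure LabelSpace :=
  Measure.sum fun k => ψ {k} • (Measure.pi fun _ : Fin k => ν).map (Sigma.mk k)

/-- The doubly random temporal graph model on vertex set `V` with label value
distribution `ν` and label multiplicity distribution `ψ`: all edges receive independent
identically distributed label data. -/
def model (V : Type*) [Fintype V] [DecidableEq V] (ν : Measure ℝ) (ψ : Measure ℕ) :
    Measure (Sym2 V → LabelSpace) :=
  Measure.pi fun _ : Sym2 V => edgeMeasure ν ψ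

/-- The continuous doubly random temporal graph `Γ_V(ψ)`. -/
abbrev contModel (V : Type*) [Fintype V] [DecidableEq V] (ψ : Measure ℕ) :
    Measure (Sym2 V → LabelSpace) := model V unif01 ψ

/-- The discrete doubly random temporal graph `Γ_V(ψ, T)`. -/
abbrev discModel (V : Type*) [Fintype V] [DecidableEq V] (ψ : Measure ℕ) (T : ℕ) :
    Measure (Sym2 V → LabelSpace) := model V (unifDisc T) ψ

/-- The temporal graph determined by a sample `ω` of the model: each non-loop edge
carries the sampled set of labels. -/
def toTGraph {V : Type*} [DecidableEq V] (ω : Sym2 V → LabelSpace) : TGraph V :=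
  fun e => if e.IsDiag then ∅ else Finset.image (ω e).2 Finset.univ

/-- The `T`-discretization of a temporal graph: each label `l` is replaced by `⌈T·l⌉`. -/
def discretize {V : Type*} (T : ℕ) (Λ : TGraph V) : TGraph V :=
  fun e => (Λ e).image fun l => ((⌈(T : ℝ) * l⌉ : ℤ) : ℝ)

/-- `ψ` is a label multiplicity distribution: a probability distribution on `ℕ` with
positive finite mean and finite second moment. -/
def IsLMD (ψ : Measure ℕ) : Prop :=
  IsProbabilityMeasure ψ ∧ Integrable (fun k : ℕ => (k : ℝ)) ψ ∧
    Integrable (fun k : ℕ => (k : ℝ) ^ 2) ψ ∧ 0 < ∫ k, (k : ℝ) ∂ψ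

/-- The mean `r` of a label multiplicity distribution. -/
def lmdMean (ψ : Measure ℕ) : ℝ := ∫ k, (k : ℝ) ∂ψ

/-- The second moment `r₂` of a label multiplicity distribution. -/
def lmdSq (ψ : Measure ℕ) : ℝ := ∫ k, (k : ℝ) ^ 2 ∂ψ

/-- `q = P[Q > 0]` for a label multiplicity distribution. -/
def lmdPos (ψ : Measure ℕ) : ℝ := (ψ {k | 0 < k}).toReal

/-- `v` is reachable from the set `S` by time `t` in the temporal graph `Λ`. -/
def ReachBy {V : Type*} (Λ : TGraph V) (S : Set V) (t : ℝ) (v : V) : Prop :=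
  v ∈ S ∨ ∃ (k : ℕ) (f : ℕ → V) (ts : ℕ → ℝ), 0 < k ∧ f 0 ∈ S ∧ f k = v ∧
    (∀ i < k, ts i ∈ Λ s(f i, f (i + 1))) ∧
    (∀ i j, i < j → j < k → ts i < ts j) ∧ ts (k - 1) ≤ t

/-- The reachability ball `B_Λ(S, t)`. -/
def ball {V : Type*} (Λ : TGraph V) (S : Set V) (t : ℝ) : Set V := {v | ReachBy Λ S t v}

/-- The doubling time of the set `S` in `Λ` (with value `∞` if the reachability ball
never doubles in size). -/
def doubleTime {V : Type*} (Λ : TGraph V) (S : Set V) : ℝ≥0∞ :=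
  ⨅ (t : ℝ) (_ : 0 ≤ t ∧ 2 * S.ncard ≤ (ball Λ S t).ncard), ENNReal.ofReal t

/-- The doubling time of the temporal graph `Λ`: the maximum doubling time over all
nonempty vertex sets of size at most half the number of vertices. -/
def doubleAll {V : Type*} [Fintype V] (Λ : TGraph V) : ℝ≥0∞ :=
  ⨆ (S : Set V) (_ : S.Nonempty ∧ 2 * S.ncard ≤ Fintype.card V), doubleTime Λ S

/-- `Double⁻`: the maximum doubling time over nonempty sets of size at most `n/4`. -/
def doubleSmall {V : Type*} [Fintype V] (Λ : TGraph V) : ℝ≥0∞ :=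
  ⨆ (S : Set V) (_ : S.Nonempty ∧ 4 * S.ncard ≤ Fintype.card V), doubleTime Λ S

/-- `Double⁺`: the maximum doubling time over sets of size in `(n/4, n/2]`. -/
def doubleLarge {V : Type*} [Fintype V] (Λ : TGraph V) : ℝ≥0∞ :=
  ⨆ (S : Set V) (_ : Fintype.card V < 4 * S.ncard ∧ 2 * S.ncard ≤ Fintype.card V),
    doubleTime Λ S

/-- The partial reversal `ℛ(Λ, t)`: every label `l < t` is replaced by `t - l`. -/
def reverse {V : Type*} (Λ : TGraph V) (t : ℝ) : TGraph V :=
  fun e => (Λ e).image fun l => if l < t then t - l else l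

/-- The rank of a time `x` among all the labels of the sample `ω`: the number of labels
(on genuine, non-loop, edges) that are at most `x`. -/
def rank {V : Type*} [Fintype V] [DecidableEq V] (ω : Sym2 V → LabelSpace) (x : ℝ) : ℕ :=
  ∑ e ∈ Finset.univ.filter (fun e : Sym2 V => ¬ e.IsDiag),
    Nat.card {i : Fin (ω e).1 // (ω e).2 i ≤ x}

/-- The order discretization `𝒢^O` of the sample `ω`: each label is replaced by its rank
among all labels. -/
def orderDisc {V : Type*} [Fintype V] [DecidableEq V] (ω : Sym2 V → LabelSpace) :
    TGraph V :=
  fun e => if e.IsDiag then ∅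
    else Finset.image (fun i => (rank ω ((ω e).2 i) : ℝ)) Finset.univ


/-- The inclusion of `k`-tuples of labels into the label space. -/
def mkL (k : ℕ) (x : Fin k → ℝ) : LabelSpace := ⟨k, x⟩

lemma sigma_measurableSet {s : Set LabelSpace}
    (h : ∀ k, MeasurableSet (mkL k ⁻¹' s)) :
    MeasurableSet s := by
  change @MeasurableSet _ (⨅ a, _) s
  rw [MeasurableSpace.measurableSet_iInf]
  exact h

lemma sigma_mk_measurable (k : ℕ) : Measurable (mkL k) := by
  intro s hs
  change @MeasurableSet _ (⨅ a, _) s at hs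
  rw [MeasurableSpace.measurableSet_iInf] at hs
  exact hs k

/-- The event that an edge has some label in `B`. -/
def hits (B : Set ℝ) : Set LabelSpace := {x | ∃ i, x.2 i ∈ B}

/-- Mean of `ψ` as an extended nonnegative real. -/
def emean (ψ : Measure ℕ) : ℝ≥0∞ := ∑' k : ℕ, ψ {k} * (k : ℝ≥0∞)

lemma hits_measurable {B : Set ℝ} (hB : MeasurableSet B) : MeasurableSet (hits B) := by
  apply sigma_measurableSet
  intro k
  have : mkL k ⁻¹' (hits B)
      = ⋃ i : Fin k, (fun x : Fin k → ℝ => x i) ⁻¹' B := by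
    ext x; simp [hits, mkL]
  rw [this]
  exact MeasurableSet.iUnion fun i => measurable_pi_apply i hB

lemma edgeMeasure_apply (ν : Measure ℝ) (ψ : Measure ℕ) {s : Set LabelSpace}
    (hs : MeasurableSet s) :
    edgeMeasure ν ψ s = ∑' k, ψ {k} * (Measure.pi fun _ : Fin k => ν) (mkL k ⁻¹' s) := by
  unfold edgeMeasure
  rw [Measure.sum_apply _ hs]
  congr 1 with k
  rw [Measure.smul_apply, smul_eq_mul]
  congr 1
  exact Measure.map_apply (sigma_mk_measurable k) hs

lemma edgeMeasure_prob (ν : Measure ℝ) [IsProbabilityMeasure ν] (ψ : Measure ℕ)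
    [IsProbabilityMeasure ψ] : IsProbabilityMeasure (edgeMeasure ν ψ) := by
  constructor
  rw [edgeMeasure_apply _ _ MeasurableSet.univ]
  simp only [preimage_univ, measure_univ, mul_one]
  have := lintegral_countable' (μ := ψ) (fun _ => 1)
  simpa using this.symm

lemma edgeMeasure_hits (ν : Measure ℝ) [IsProbabilityMeasure ν] (ψ : Measure ℕ)
    {B : Set ℝ} (hB : MeasurableSet B) :
    edgeMeasure ν ψ (hits B) ≤ emean ψ * ν B := by
  rw [edgeMeasure_apply _ _ (hits_measurable hB), emean, ← ENNReal.tsum_mul_right]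
  refine ENNReal.tsum_le_tsum fun k => ?_
  rw [mul_assoc]
  gcongr
  have : mkL k ⁻¹' (hits B)
      = ⋃ i : Fin k, (fun x : Fin k → ℝ => x i) ⁻¹' B := by
    ext x; simp [hits, mkL]
  rw [this]
  refine (measure_iUnion_fintype_le _ _).trans ?_
  have h (i : Fin k) : (Measure.pi fun _ : Fin k => ν) ((fun x : Fin k → ℝ => x i) ⁻¹' B) = ν B :=
    (measurePreserving_eval (fun _ : Fin k => ν) i).measure_preimage hB.nullMeasurableSet
  simp [h]

lemma emean_ne_top {ψ : Measure ℕ} (hψ : IsLMD ψ) : emean ψ ≠ ∞ := by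
  have h := hψ.2.1.lintegral_lt_top
  rw [lintegral_countable'] at h
  refine ne_of_lt (lt_of_eq_of_lt ?_ h)
  unfold emean
  congr 1 with k
  rw [mul_comm]; simp

lemma unifDisc_apply (T : ℕ) {B : Set ℝ} (hB : MeasurableSet B) [DecidablePred fun k : ℕ => (k:ℝ) ∈ B] :
    unifDisc T B = (T : ℝ≥0∞)⁻¹ * (((Finset.Icc 1 T).filter fun k : ℕ => (k : ℝ) ∈ B).card : ℝ≥0∞) := by
  simp [unifDisc, hB, Set.indicator_apply]

lemma unifDisc_prob {T : ℕ} (hT : 0 < T) : IsProbabilityMeasure (unifDisc T) := by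
  constructor
  classical
  rw [unifDisc_apply T MeasurableSet.univ]
  simp
  exact ENNReal.inv_mul_cancel (by simp; omega) (by simp)

/-- Measure of a box event. -/
lemma pi_box {V E : Type*} [Fintype V] [DecidableEq V] [Fintype E] (μ : Measure LabelSpace)
    [IsProbabilityMeasure μ] (g : E → V) (hg : Function.Injective g) (B : E → Set LabelSpace) :
    (Measure.pi fun _ : V => μ) {ω | ∀ e, ω (g e) ∈ B e} ≤ ∏ e, μ (B e) := by
  classical
  have : {ω : V → LabelSpace | ∀ e, ω (g e) ∈ B e}
      = Set.univ.pi (fun v => {y | ∀ e, g e = v → y ∈ B e}) := by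
    ext ω
    simp only [Set.mem_ofPred_eq, Set.mem_univ_pi]
    exact ⟨fun h v e hv => hv ▸ h e, fun h e => h _ e rfl⟩
  rw [this, Measure.pi_pi]
  refine (Finset.prod_le_prod_of_subset_of_le_one' (Finset.subset_univ (Finset.univ.image g))
    (fun _ _ _ => prob_le_one)).trans ?_
  rw [Finset.prod_image (fun a _ b _ h => hg h)]
  refine Finset.prod_le_prod' fun e _ => measure_mono ?_
  intro y hy
  exact hy e rfl

lemma unifDisc_window (T t b : ℕ) :
    unifDisc T (Ioo ((t : ℝ) - b) (t + b)) ≤ (2 * b : ℕ) * (T : ℝ≥0∞)⁻¹ := by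
  classical
  rw [unifDisc_apply T measurableSet_Ioo, mul_comm]
  gcongr
  calc _ ≤ (Finset.Ico (t + 1 - b) (t + b)).card := by
        apply Finset.card_le_card
        intro k hk
        simp only [Finset.mem_filter, Set.mem_Ioo, Finset.mem_Ico] at hk ⊢
        have h1 : t < k + b := by
          have := hk.2.1
          have : (t : ℝ) < ((k + b : ℕ) : ℝ) := by push_cast; linarith
          exact_mod_cast this
        have h2 : k < t + b := by exact_mod_cast hk.2.2
        omega
    _ ≤ 2 * b := by simp; omega

lemma unifDisc_single {T t : ℕ} :
    unifDisc T {(t : ℝ)} ≤ (T : ℝ≥0∞)⁻¹ := by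
  classical
  rw [unifDisc_apply T (measurableSet_singleton _)]
  refine mul_le_of_le_one_right' ?_
  rw [Nat.cast_le_one, Finset.card_le_one]
  intro a ha b hb
  simp at ha hb
  omega

lemma unifDisc_off {T : ℕ} :
    unifDisc T {x : ℝ | ∃ t ∈ Finset.Icc 1 T, x = (t : ℕ)}ᶜ = 0 := by
  classical
  have : MeasurableSet {x : ℝ | ∃ t ∈ Finset.Icc 1 T, x = (t : ℕ)}ᶜ := by
    refine (Set.Finite.measurableSet ?_).compl
    refine ((Finset.Icc 1 T).finite_toSet.image (fun t : ℕ => (t : ℝ))).subset ?_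
    rintro x ⟨t, ht, rfl⟩
    exact ⟨t, ht, rfl⟩
  rw [unifDisc_apply T this, Finset.filter_eq_empty_iff.2]
  · simp
  · intro k hk h
    exact h ⟨k, hk, rfl⟩

/-- First moment bound. -/
lemma first_moment {W : Type} [Fintype W] (G : SimpleGraph W) (m : ℕ)
    (hm : G.edgeSet.ncard = m + 1) (ψ : Measure ℕ) [IsProbabilityMeasure ψ]
    (n T b : ℕ) (hT : 0 < T) :
    discModel (Fin n) ψ T {ω | Contains G (fun _ _ => False) (toTGraph ω) (b : ℝ)} ≤
      (n : ℝ≥0∞) ^ Fintype.card W * (emean ψ * (emean ψ * ((2 * b : ℕ) * (T : ℝ≥0∞)⁻¹)) ^ m) := by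
  classical
  have := unifDisc_prob hT
  have := edgeMeasure_prob (unifDisc T) ψ
  set S : Set ℝ := {x : ℝ | ∃ t ∈ Finset.Icc 1 T, x = (t : ℕ)} with hS
  have hSm : MeasurableSet S := by
    refine (Set.Finite.measurableSet ?_)
    refine ((Finset.Icc 1 T).finite_toSet.image (fun t : ℕ => (t : ℝ))).subset ?_
    rintro x ⟨t, ht, rfl⟩
    exact ⟨t, ht, rfl⟩
  have hcard : Fintype.card G.edgeSet = m + 1 := by
    rw [← hm, Set.ncard_eq_toFinset_card', Set.toFinset_card]
  have hne : Nonempty G.edgeSet := Fintype.card_pos_iff.1 (by omega)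
  obtain ⟨e0⟩ := hne
  let μ := edgeMeasure (unifDisc T) ψ
  let M : Measure (Sym2 (Fin n) → LabelSpace) := Measure.pi fun _ => μ
  let B : ℕ → G.edgeSet → Set ℝ := fun t e =>
    if e = e0 then {(t : ℝ)} else Ioo ((t : ℝ) - b) (t + b)
  have hB : ∀ t e, MeasurableSet (B t e) := by
    intro t e
    simp only [B]
    split_ifs
    · exact measurableSet_singleton _
    · exact measurableSet_Ioo
  let A : (W → Fin n) → ℕ → Set (Sym2 (Fin n) → LabelSpace) := fun φ t =>
    {ω | ∀ e : G.edgeSet, ω (Sym2.map φ e.1) ∈ hits (B t e)}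
  let N : Set (Sym2 (Fin n) → LabelSpace) := ⋃ x, {ω | ω x ∈ hits Sᶜ}
  let J : Finset (W → Fin n) := Finset.univ.filter Function.Injective
  have hsub : {ω : Sym2 (Fin n) → LabelSpace |
      Contains G (fun _ _ => False) (toTGraph ω) (b : ℝ)} ⊆
      N ∪ ⋃ φ ∈ J, ⋃ t ∈ Finset.Icc 1 T, A φ t := by
    rintro ω ⟨φ, hφ, lab, h1, -, h3⟩
    by_cases hN : ω ∈ N
    · exact Or.inl hN
    right
    have h1' : ∀ e ∈ G.edgeSet, ∃ i, (ω (Sym2.map φ e)).2 i = lab e := by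
      intro e he
      have := h1 e he
      unfold toTGraph at this
      split_ifs at this
      · simp at this
      · simpa using this
    have hlS : lab e0 ∈ S := by
      by_contra hc
      apply hN
      obtain ⟨i, hi⟩ := h1' e0 e0.2
      refine Set.mem_iUnion.2 ⟨Sym2.map φ e0, i, ?_⟩
      rw [hi]; exact hc
    obtain ⟨t, ht, hlt⟩ := hlS
    simp only [Set.mem_iUnion]
    refine ⟨φ, by simp [J, hφ], t, ht, ?_⟩
    intro e
    obtain ⟨i, hi⟩ := h1' e e.2
    refine ⟨i, ?_⟩
    rw [hi]
    simp only [B]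
    split_ifs with he
    · rw [he]; exact hlt
    · have h4 := h3 e e.2 e0 e0.2
      have h5 := h3 e0 e0.2 e e.2
      constructor <;> linarith
  have hN0 : M N = 0 := by
    refine measure_iUnion_null fun x => ?_
    have h := pi_box μ (fun _ : Unit => x) (fun _ _ _ => rfl) (fun _ => hits Sᶜ)
    simp only [forall_const, Finset.univ_unique, Finset.prod_singleton] at h
    have h2 := edgeMeasure_hits (unifDisc T) ψ hSm.compl
    rw [unifDisc_off, mul_zero] at h2
    exact le_antisymm (h.trans h2) zero_le
  have hA : ∀ φ ∈ J, ∀ t, M (A φ t) ≤ (emean ψ * (T : ℝ≥0∞)⁻¹) *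
      (emean ψ * ((2 * b : ℕ) * (T : ℝ≥0∞)⁻¹)) ^ m := by
    intro φ hφ t
    have hφ' : Function.Injective φ := by simpa [J] using hφ
    have hinj : Function.Injective (fun e : G.edgeSet => Sym2.map φ e.1) :=
      (Sym2.map.injective hφ').comp Subtype.val_injective
    refine (pi_box μ _ hinj (fun e => hits (B t e))).trans ?_
    rw [← Finset.mul_prod_erase _ _ (Finset.mem_univ e0)]
    gcongr
    · refine (edgeMeasure_hits (unifDisc T) ψ (hB t e0)).trans ?_
      gcongr
      simp only [B, if_true]
      exact unifDisc_single
    · have hc : (Finset.univ.erase e0).card = m := by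
        rw [Finset.card_erase_of_mem (Finset.mem_univ _), Finset.card_univ, hcard]; rfl
      rw [← hc, ← Finset.prod_const]
      refine Finset.prod_le_prod' fun e he => ?_
      refine (edgeMeasure_hits (unifDisc T) ψ (hB t e)).trans ?_
      gcongr
      simp only [B, if_neg (Finset.ne_of_mem_erase he)]
      exact unifDisc_window T t b
  set D := (emean ψ * ((2 * b : ℕ) * (T : ℝ≥0∞)⁻¹)) ^ m with hD
  have hTT : (T : ℝ≥0∞) * (T : ℝ≥0∞)⁻¹ = 1 :=
    ENNReal.mul_inv_cancel (by simp; omega) (by simp)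
  calc discModel (Fin n) ψ T {ω | Contains G (fun _ _ => False) (toTGraph ω) (b : ℝ)}
      ≤ M (N ∪ ⋃ φ ∈ J, ⋃ t ∈ Finset.Icc 1 T, A φ t) := measure_mono hsub
    _ ≤ M N + M (⋃ φ ∈ J, ⋃ t ∈ Finset.Icc 1 T, A φ t) := measure_union_le _ _
    _ = M (⋃ φ ∈ J, ⋃ t ∈ Finset.Icc 1 T, A φ t) := by rw [hN0, zero_add]
    _ ≤ ∑ φ ∈ J, ∑ t ∈ Finset.Icc 1 T, M (A φ t) := by
        refine (measure_biUnion_finset_le _ _).trans ?_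
        exact Finset.sum_le_sum fun φ _ => measure_biUnion_finset_le _ _
    _ ≤ ∑ φ ∈ J, ∑ t ∈ Finset.Icc 1 T, (emean ψ * (T : ℝ≥0∞)⁻¹) * D :=
        Finset.sum_le_sum fun φ hφ => Finset.sum_le_sum fun t _ => hA φ hφ t
    _ = (J.card : ℝ≥0∞) * (emean ψ * D) := by
        simp only [Finset.sum_const, nsmul_eq_mul, Nat.card_Icc, Nat.add_sub_cancel]
        congr 1
        calc (T : ℝ≥0∞) * (emean ψ * (T : ℝ≥0∞)⁻¹ * D)
            = ((T : ℝ≥0∞) * (T : ℝ≥0∞)⁻¹) * (emean ψ * D) := by ring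
          _ = _ := by rw [hTT, one_mul]
    _ ≤ _ := by
        gcongr
        have : J.card ≤ n ^ Fintype.card W := by
          refine (Finset.card_le_univ _).trans ?_
          simp
        exact_mod_cast this

lemma contains_sub {VH V : Type*} (H : SimpleGraph VH) (P : Sym2 VH → Sym2 VH → Prop)
    (I : H.Subgraph) (Λ : TGraph V) (δ : ℝ) (h : Contains H P Λ δ) :
    Contains I.coe (fun _ _ => False) Λ δ := by
  obtain ⟨Φ, hΦ, lab, h1, -, h3⟩ := h
  have key : ∀ e ∈ I.coe.edgeSet, Sym2.map Subtype.val e ∈ H.edgeSet := by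
    intro e he
    apply I.edgeSet_subset
    rw [← SimpleGraph.Subgraph.image_coe_edgeSet_coe]
    exact ⟨e, he, rfl⟩
  refine ⟨Φ ∘ Subtype.val, hΦ.comp Subtype.val_injective, lab ∘ Sym2.map Subtype.val, ?_, ?_, ?_⟩
  · intro e he
    have := h1 _ (key e he)
    rwa [Sym2.map_map] at this
  · simp
  · intro e he f hf
    exact h3 _ (key e he) _ (key f hf)

/-- If `β(n)/T(n)·n^{ρ_H} → 0` (and `β(n)` is eventually at least the
height of `P`), then a sample of `Γ_{[n]}(ψ, T(n))` contains `(H, P)` as a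
`β(n)`-temporal motif with probability tending to `0`. -/
theorem statement3 {VH : Type} [Fintype VH] [DecidableEq VH] (H : SimpleGraph VH)
    (hH : 2 ≤ H.edgeSet.ncard)
    (P : Sym2 VH → Sym2 VH → Prop) (hP : StrictPartialOrderOn H.edgeSet P)
    (ψ : Measure ℕ) (hψ : IsLMD ψ)
    (β T : ℕ → ℕ) (hβT : ∀ n, β n ≤ T n)
    (hheight : ∃ n₀ : ℕ, ∀ n ≥ n₀, ∀ s : Finset (Sym2 VH),
      ↑s ⊆ H.edgeSet → IsChain P ↑s → s.card ≤ β n)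
    (hthr : Tendsto (fun n : ℕ => (β n : ℝ) / (T n : ℝ) * (n : ℝ) ^ sparsity H)
      atTop (𝓝 0)) :
    Tendsto (fun n : ℕ =>
        discModel (Fin n) ψ (T n) {ω | Contains H P (toTGraph ω) (β n : ℝ)})
      atTop (𝓝 0) := by
  classical
  have hpr := hψ.1
  obtain ⟨I, hI2, hIs⟩ : sparsity H ∈ {x : ℝ | ∃ I : H.Subgraph, 2 ≤ I.edgeSet.ncard ∧
      x = (I.verts.ncard : ℝ) / ((I.edgeSet.ncard : ℝ) - 1)} := by
    refine Set.Nonempty.csInf_mem ⟨_, ⊤, by simpa using hH, rfl⟩ ?_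
    refine (Set.finite_range (fun I : H.Subgraph =>
      (I.verts.ncard : ℝ) / ((I.edgeSet.ncard : ℝ) - 1))).subset ?_
    rintro x ⟨I, -, rfl⟩
    exact ⟨I, rfl⟩
  obtain ⟨m, hm⟩ : ∃ m, I.edgeSet.ncard = m + 1 := ⟨I.edgeSet.ncard - 1, by omega⟩
  have hm0 : m ≠ 0 := by omega
  have hmc : I.coe.edgeSet.ncard = m + 1 := by
    rw [← hm, ← SimpleGraph.Subgraph.image_coe_edgeSet_coe,
      Set.ncard_image_of_injective _ (Sym2.map.injective Subtype.val_injective)]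
  have hρ : sparsity H * m = I.verts.ncard := by
    have : (m : ℝ) ≠ 0 := by exact_mod_cast hm0
    rw [hIs, hm]; push_cast; rw [add_sub_cancel_right, div_mul_cancel₀ _ this]
  obtain ⟨r, hr⟩ : ∃ r : ℝ≥0, emean ψ = r := ⟨_, (ENNReal.coe_toNNReal (emean_ne_top hψ)).symm⟩
  obtain ⟨n₀, hn₀⟩ := hheight
  obtain ⟨e, he⟩ : H.edgeSet.Nonempty := by
    rw [Set.nonempty_iff_ne_empty]; rintro h; simp [h] at hH
  have hlim : Tendsto (fun n : ℕ => ENNReal.ofReal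
      (r * (r * 2 * ((β n : ℝ) / (T n : ℝ) * (n : ℝ) ^ sparsity H)) ^ m)) atTop (𝓝 0) := by
    have h1 := ((hthr.const_mul ((r : ℝ) * 2)).pow m).const_mul (r : ℝ)
    rw [mul_zero, zero_pow hm0, mul_zero] at h1
    simpa using ENNReal.tendsto_ofReal h1
  refine tendsto_of_tendsto_of_tendsto_of_le_of_le' tendsto_const_nhds hlim
    (Eventually.of_forall fun _ => zero_le) ?_
  filter_upwards [eventually_ge_atTop n₀] with n hn
  have hb : 1 ≤ β n := by
    have := hn₀ n hn {e} (by simpa using he) (by simp)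
    simpa using this
  have hT : 0 < T n := lt_of_lt_of_le hb (hβT n)
  refine (measure_mono (fun ω hω => contains_sub H P I _ _ hω)).trans
    ((first_moment I.coe m hmc ψ n (T n) (β n) hT).trans (le_of_eq ?_))
  have hTr : (0 : ℝ) < T n := by exact_mod_cast hT
  have hpow : ((n : ℝ) ^ sparsity H) ^ m = (n : ℝ) ^ Fintype.card I.verts := by
    rw [← Real.rpow_natCast, ← Real.rpow_mul (by positivity), hρ, Real.rpow_natCast,
      Set.ncard_eq_toFinset_card', Set.toFinset_card]
  have hreal : (r : ℝ) * (r * 2 * ((β n : ℝ) / (T n : ℝ) * (n : ℝ) ^ sparsity H)) ^ m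
      = (n : ℝ) ^ Fintype.card I.verts * (r * (r * ((2 * β n : ℕ) * (T n : ℝ)⁻¹)) ^ m) := by
    rw [← hpow]; push_cast
    rw [mul_left_comm ((_ : ℝ) ^ m), ← mul_pow]
    congr 2
    ring
  rw [hreal, hr, ENNReal.ofReal_mul (by positivity), ENNReal.ofReal_mul (by positivity),
    ENNReal.ofReal_pow (by positivity), ENNReal.ofReal_pow (by positivity),
    ENNReal.ofReal_mul (by positivity), ENNReal.ofReal_mul (by positivity),
    ENNReal.ofReal_inv_of_pos hTr, ENNReal.ofReal_natCast, ENNReal.ofReal_natCast,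
    ENNReal.ofReal_natCast, ENNReal.ofReal_coe_nnreal]

end RTG
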